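/- arXiv:2505.08839 — 3 statements merged into one kernel-verified Lean document; each statement's English description precedes it below -/
import Mathlib

section
/- Let M and L be sequences of positive reals with M_0 = 1 = L_0 and L log-convex, and let λ denote the quotient sequence of L. Then the following are equivalent: (i) there exist a ∈ ℕ_{>0} and B ≥ 1 such that L_{2p} ≤ B^p·L_p·(M_{ap})^{1/a} for all p ∈ ℕ; (ii) there exist a ∈ ℕ_{>0} and H ≥ 1 such that L_{p+q} ≤ H^p·L_q·(M_{ap})^{1/a} for all p, q ∈ ℕ with 0 ≤ q ≤ p; (iii) there exist a ∈ ℕ_{>0} and A ≥ 1 such that λ_p ≤ A·(M_{ap})^{1/(ap)} for all p ≥ 1. Moreover, in (i) and (ii) one can choose the same a; if (i) holds with a then (iii) holds with the same a; and if (iii) holds with a then (ii) holds with 2a. -/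
/-!
Log-convexity of `L` says that the quotients `r n = L (n + 1) / L n` increase with `n`.
Writing `L (n + p) / L n` as the product `r n * ⋯ * r (n + p - 1)` of `p` consecutive quotients,

* this product increases with `n`, so `L (p + q) / L q ≤ L (2 * p) / L p` for `q ≤ p`, which turns
  (i) into (ii), while (i) is the case `q = p` of (ii) (`ratio_le_ratio`);
* the product is at least `r k ^ p` for every `k ≤ n`; at `n = p` and `k = p - 1`, where
  `r k = λ_p`, this bounds `λ_p ^ p` by `L (2 * p) / L p`, and taking `p`-th roots in (i) gives (iii) (`pow_mul_le`);
* the product is at most the `p`-th power of its last factor, so `L (2 * p) / L p ≤ λ_{2p} ^ p`,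
  and (iii) with parameter `a` at the index `2 * p` gives (i) with parameter `2 * a`
  (`le_mul_pow`).
-/

open Real Filter Set

noncomputable section

/-- The class `LC` of normalized log-convex sequences with `(M_p)^{1/p} → ∞`. -/
def IsLC (M : ℕ → ℝ) : Prop :=
  (∀ p, 0 < M p) ∧ M 0 = 1 ∧ 1 ≤ M 1 ∧
  (∀ p : ℕ, 1 ≤ p → (M p) ^ 2 ≤ M (p - 1) * M (p + 1)) ∧
  Filter.Tendsto (fun p : ℕ => (M p) ^ ((p : ℝ)⁻¹)) Filter.atTop Filter.atTop

/-- The sequence of quotients `μ_0 = 1`, `μ_p = M_p / M_{p-1}`. -/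
def seqQuot (M : ℕ → ℝ) (p : ℕ) : ℝ :=
  if p = 0 then 1 else M p / M (p - 1)

/-- The associated weight function `ω_M(t) = sup_p log(t^p / M_p)`. -/
def omegaM (M : ℕ → ℝ) (t : ℝ) : ℝ :=
  ⨆ p : ℕ, Real.log (t ^ p / M p)

/-- The auxiliary sequence `M̃^a_p = (M_{ap})^{1/a}`. -/
def tildeSeq (M : ℕ → ℝ) (a : ℕ) (p : ℕ) : ℝ :=
  (M (a * p)) ^ ((a : ℝ)⁻¹)

/-- Condition (genmg) for the parameter `d`. -/
def genMG (M : ℕ → ℝ) (d : ℕ) : Prop :=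
  ∃ A : ℝ, 1 ≤ A ∧ ∀ p : ℕ, 1 ≤ p →
    seqQuot M p ≤ A * (M (d * p)) ^ (((d : ℝ) * (p : ℝ))⁻¹)

/-- The moderate growth index `g(M) ∈ ℕ ∪ {+∞}`. -/
def gIndex (M : ℕ → ℝ) : ℕ∞ :=
  sInf {e : ℕ∞ | ∃ n : ℕ, 0 < n ∧ genMG M n ∧ e = (n : ℕ∞)}

/-- The relation `M ≼ N`, i.e. `sup_{p ≥ 1} (M_p/N_p)^{1/p} < ∞`. -/
def Preceq (M N : ℕ → ℝ) : Prop :=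
  ∃ C : ℝ, ∀ p : ℕ, 1 ≤ p → (M p / N p) ^ ((p : ℝ)⁻¹) ≤ C

/-- The class `W₀` of normalized weight functions. -/
def IsW0 (ω : ℝ → ℝ) : Prop :=
  ContinuousOn ω (Set.Ici 0) ∧
  MonotoneOn ω (Set.Ici 0) ∧
  (∀ t ∈ Set.Icc (0 : ℝ) 1, ω t = 0) ∧
  Filter.Tendsto ω Filter.atTop Filter.atTop ∧
  (fun t => Real.log t) =o[Filter.atTop] ω ∧
  ConvexOn ℝ Set.univ (fun t => ω (Real.exp t))

/-- The Legendre–Fenchel–Young conjugate `φ*_ω(x) = sup{xy − ω(e^y) : y ≥ 0}`. -/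
def phiStar (ω : ℝ → ℝ) (x : ℝ) : ℝ :=
  sSup {z : ℝ | ∃ y : ℝ, 0 ≤ y ∧ z = x * y - ω (Real.exp y)}

/-- The associated weight matrix `W^(ℓ)_p = exp(φ*_ω(ℓp)/ℓ)`. -/
def Wmat (ω : ℝ → ℝ) (l : ℝ) (p : ℕ) : ℝ :=
  Real.exp (phiStar ω (l * p) / l)

/-- Condition `(ω₆)`. -/
def Omega6 (ω : ℝ → ℝ) : Prop :=
  ∃ H : ℝ, 1 ≤ H ∧ ∀ t : ℝ, 0 ≤ t → 2 * ω t ≤ ω (H * t) + H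

/-- The counting function `Σ_M(t) = #{p ≥ 1 : μ_p ≤ t}`. -/
def SigmaM (M : ℕ → ℝ) (t : ℝ) : ℕ :=
  Set.ncard {p : ℕ | 1 ≤ p ∧ seqQuot M p ≤ t}

end

/-- Condition (i) of Proposition `technlemma3` for the parameter `a`. -/
def S4P1 (M L : ℕ → ℝ) (a : ℕ) : Prop :=
  ∃ B : ℝ, 1 ≤ B ∧ ∀ p : ℕ, L (2 * p) ≤ B ^ p * L p * (M (a * p)) ^ ((a : ℝ)⁻¹)

/-- Condition (ii) of Proposition `technlemma3` for the parameter `a`. -/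
def S4P2 (M L : ℕ → ℝ) (a : ℕ) : Prop :=
  ∃ H : ℝ, 1 ≤ H ∧ ∀ p q : ℕ, q ≤ p →
    L (p + q) ≤ H ^ p * L q * (M (a * p)) ^ ((a : ℝ)⁻¹)

/-- Condition (iii) of Proposition `technlemma3` for the parameter `a`. -/
def S4P3 (M L : ℕ → ℝ) (a : ℕ) : Prop :=
  ∃ A : ℝ, 1 ≤ A ∧ ∀ p : ℕ, 1 ≤ p →
    seqQuot L p ≤ A * (M (a * p)) ^ (((a : ℝ) * (p : ℝ))⁻¹)


/-- The quotients of a positive log-convex sequence increase. -/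
lemma quot_mono {L : ℕ → ℝ} (hLpos : ∀ p, 0 < L p)
    (hLlc : ∀ p : ℕ, 1 ≤ p → (L p) ^ 2 ≤ L (p - 1) * L (p + 1)) :
    Monotone (fun n => L (n + 1) / L n) := by
  refine monotone_nat_of_le_succ fun n => ?_
  have h := hLlc (n + 1) (by omega)
  rw [Nat.add_sub_cancel] at h
  rw [div_le_div_iff₀ (hLpos _) (hLpos _)]
  nlinarith [h]

lemma quot_mul {L : ℕ → ℝ} (hLpos : ∀ p, 0 < L p) (n : ℕ) :
    L (n + 1) = L (n + 1) / L n * L n :=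
  (div_mul_cancel₀ _ (hLpos n).ne').symm

lemma ratio_le_ratio {L : ℕ → ℝ} (hLpos : ∀ p, 0 < L p)
    (hr : Monotone (fun n => L (n + 1) / L n)) {n m : ℕ} (hnm : n ≤ m) (p : ℕ) :
    L (n + p) / L n ≤ L (m + p) / L m := by
  induction p with
  | zero => simp [(hLpos n).ne', (hLpos m).ne']
  | succ p ih =>
    have h1 : L (n + p + 1) / L (n + p) ≤ L (m + p + 1) / L (m + p) :=
      hr (by omega : n + p ≤ m + p)
    rw [← add_assoc, ← add_assoc, quot_mul hLpos (n + p), quot_mul hLpos (m + p),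
      mul_div_assoc, mul_div_assoc]
    exact mul_le_mul h1 ih (div_pos (hLpos _) (hLpos _)).le (div_pos (hLpos _) (hLpos _)).le

lemma pow_mul_le {L : ℕ → ℝ} (hLpos : ∀ p, 0 < L p)
    (hr : Monotone (fun n => L (n + 1) / L n)) {k n : ℕ} (hkn : k ≤ n) (p : ℕ) :
    (L (k + 1) / L k) ^ p * L n ≤ L (n + p) := by
  induction p with
  | zero => simp
  | succ p ih =>
    have h1 : L (k + 1) / L k ≤ L (n + p + 1) / L (n + p) := hr (by omega : k ≤ n + p)
    rw [← add_assoc, quot_mul hLpos (n + p), pow_succ', mul_assoc]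
    exact mul_le_mul h1 ih
      (mul_pos (pow_pos (div_pos (hLpos _) (hLpos _)) _) (hLpos _)).le
      (div_pos (hLpos _) (hLpos _)).le

lemma le_mul_pow {L : ℕ → ℝ} (hLpos : ∀ p, 0 < L p)
    (hr : Monotone (fun n => L (n + 1) / L n)) {n k : ℕ} (p : ℕ) (hk : n + p ≤ k + 1) :
    L (n + p) ≤ (L (k + 1) / L k) ^ p * L n := by
  induction p with
  | zero => simp
  | succ p ih =>
    have h1 : L (n + p + 1) / L (n + p) ≤ L (k + 1) / L k := hr (by omega : n + p ≤ k)
    rw [← add_assoc, quot_mul hLpos (n + p), pow_succ', mul_assoc]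
    exact mul_le_mul h1 (ih (by omega)) (hLpos _).le (div_pos (hLpos _) (hLpos _)).le

/-- Raising the root in condition (iii) to a power: `(x^{1/(bp)})^p = x^{1/b}`. -/
lemma rpow_root_pow {x : ℝ} (hx : 0 < x) (b : ℝ) {p : ℕ} (hp : 1 ≤ p) :
    (x ^ ((b * (p : ℝ))⁻¹)) ^ p = x ^ b⁻¹ := by
  have hp0 : (p : ℝ) ≠ 0 := by positivity
  rw [← Real.rpow_natCast, ← Real.rpow_mul hx.le, mul_inv, mul_assoc, inv_mul_cancel₀ hp0, mul_one]

lemma P1_iff_P2 {M L : ℕ → ℝ} (hLpos : ∀ p, 0 < L p)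
    (hr : Monotone (fun n => L (n + 1) / L n)) (a : ℕ) : S4P1 M L a ↔ S4P2 M L a := by
  constructor
  · rintro ⟨B, hB, h⟩
    refine ⟨B, hB, fun p q hqp => ?_⟩
    have h1 := ratio_le_ratio hLpos hr hqp p
    have h2 := h p
    rw [two_mul, mul_right_comm, ← div_le_iff₀ (hLpos p)] at h2
    rw [mul_right_comm, ← div_le_iff₀ (hLpos q), add_comm p q]
    exact h1.trans h2
  · rintro ⟨H, hH, h⟩
    refine ⟨H, hH, fun p => ?_⟩
    rw [two_mul]
    exact h p p le_rfl

lemma P1_to_P3 {M L : ℕ → ℝ} (hMpos : ∀ p, 0 < M p) (hLpos : ∀ p, 0 < L p)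
    (hr : Monotone (fun n => L (n + 1) / L n)) (a : ℕ) (h : S4P1 M L a) : S4P3 M L a := by
  obtain ⟨B, hB, h⟩ := h
  refine ⟨B, hB, fun p hp => ?_⟩
  obtain ⟨k, rfl⟩ : ∃ k, p = k + 1 := ⟨p - 1, by omega⟩
  have hx := hMpos (a * (k + 1))
  have h1 := pow_mul_le hLpos hr (Nat.le_succ k) (k + 1)
  have h2 := h (k + 1)
  rw [two_mul, mul_right_comm] at h2
  have h3 := le_of_mul_le_mul_right (h1.trans h2) (hLpos _)
  have hB0 : 0 ≤ B := by linarith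
  simp only [seqQuot, Nat.add_sub_cancel, Nat.succ_ne_zero, if_false]
  refine le_of_pow_le_pow_left₀ (Nat.succ_ne_zero k)
    (mul_nonneg hB0 (Real.rpow_nonneg hx.le _)) ?_
  rw [mul_pow, rpow_root_pow hx _ hp]
  exact h3

lemma P3_to_P1 {M L : ℕ → ℝ} (hMpos : ∀ p, 0 < M p) (hLpos : ∀ p, 0 < L p) (hM0 : M 0 = 1)
    (hr : Monotone (fun n => L (n + 1) / L n)) (a : ℕ) (h : S4P3 M L a) :
    S4P1 M L (2 * a) := by
  obtain ⟨A, hA, h⟩ := h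
  refine ⟨A, hA, fun p => ?_⟩
  -- At `p = 0` condition (iii) gives nothing, and the normalization `M 0 = 1` is what is needed.
  rcases Nat.eq_zero_or_pos p with rfl | hp
  · simp [hM0]
  have hx := hMpos (2 * a * p)
  obtain ⟨k, hk⟩ : ∃ k, 2 * p = k + 1 := ⟨2 * p - 1, by omega⟩
  have h1 := le_mul_pow hLpos hr (n := p) (k := k) p (by omega)
  have h2 := h (2 * p) (by omega)
  have e1 : a * (2 * p) = 2 * a * p := by ring
  have e2 : (a : ℝ) * ((2 * p : ℕ) : ℝ) = ((2 * a : ℕ) : ℝ) * (p : ℝ) := by push_cast; ring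
  rw [e1, e2, hk] at h2
  simp only [seqQuot, Nat.add_sub_cancel, Nat.succ_ne_zero, if_false] at h2
  have h3 := pow_le_pow_left₀ (div_pos (hLpos _) (hLpos _)).le h2 p
  rw [mul_pow, rpow_root_pow hx _ hp] at h3
  rw [mul_right_comm, two_mul]
  exact h1.trans (mul_le_mul_of_nonneg_right h3 (hLpos p).le)

theorem stmt4 (M L : ℕ → ℝ) (hMpos : ∀ p, 0 < M p) (hLpos : ∀ p, 0 < L p)
    (hM0 : M 0 = 1) (hL0 : L 0 = 1)
    (hLlc : ∀ p : ℕ, 1 ≤ p → (L p) ^ 2 ≤ L (p - 1) * L (p + 1)) :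
    (((∃ a : ℕ, 0 < a ∧ S4P1 M L a) ↔ (∃ a : ℕ, 0 < a ∧ S4P2 M L a)) ∧
     ((∃ a : ℕ, 0 < a ∧ S4P1 M L a) ↔ (∃ a : ℕ, 0 < a ∧ S4P3 M L a))) ∧
    (∀ a : ℕ, 0 < a → (S4P1 M L a ↔ S4P2 M L a)) ∧
    (∀ a : ℕ, 0 < a → S4P1 M L a → S4P3 M L a) ∧
    (∀ a : ℕ, 0 < a → S4P3 M L a → S4P1 M L (2 * a)) := by
  have hr := quot_mono hLpos hLlc
  have h12 := fun a => P1_iff_P2 (M := M) hLpos hr a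
  have h13 := fun a => P1_to_P3 hMpos hLpos hr a
  have h31 := fun a => P3_to_P1 hMpos hLpos hM0 hr a
  refine ⟨⟨?_, ?_, ?_⟩, fun a _ => h12 a, fun a _ => h13 a, fun a _ => h31 a⟩
  · simp only [h12]
  · rintro ⟨a, ha, h⟩
    exact ⟨a, ha, h13 a h⟩
  · rintro ⟨a, ha, h⟩
    exact ⟨2 * a, by omega, h31 a h⟩
end

section
/- Let M and N belong to the class LC and let MN denote their pointwise product ((MN)_p := M_p·N_p). Then for all t ≥ 0: ω_{MN}(t) = inf_{s>0}(ω_M(s) + ω_N(t/s)). -/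
/-!
Write `μ_k = M_{k+1}/M_k` and `ν_k = N_{k+1}/N_k`. Both are nondecreasing and unbounded, and
`s^k/M_k` is maximal at `k = p` as soon as `μ_k ≤ s` for `k < p` and `s ≤ μ_p`.

The bound `ω_{MN}(t) ≤ ω_M(s) + ω_N(t/s)` holds term by term, since
`t^p/(M_p N_p) = (s^p/M_p) * ((t/s)^p/N_p)`. For the converse with `t > 0`, let `p` be the least
index with `t < μ_p ν_p`. If `p = 0`, take `s = t/ν_0`. If `p ≥ 1`, the intervals
`[μ_{p-1}, μ_p]` and `[t/ν_p, t/ν_{p-1}]` intersect because `μ_{p-1} ν_{p-1} ≤ t ≤ μ_p ν_p`; take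
`s` in the intersection. Then the same index `p` is optimal for `M` at `s` and for `N` at `t/s`, so
`ω_M(s) + ω_N(t/s) = log (t^p/(M_p N_p)) ≤ ω_{MN}(t)`. At `t = 0` both sides vanish.
-/

open Real Filter Set

/-- The class `LC` is closed under pointwise products. -/
lemma IsLC.mul {M N : ℕ → ℝ} (hM : IsLC M) (hN : IsLC N) : IsLC (fun p => M p * N p) := by
  obtain ⟨hMp, hM0, hM1, hMc, hMt⟩ := hM
  obtain ⟨hNp, hN0, hN1, hNc, hNt⟩ := hN
  refine ⟨fun p => mul_pos (hMp p) (hNp p), by simp [hM0, hN0], ?_, ?_, ?_⟩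
  · exact one_le_mul_of_one_le_of_one_le hM1 hN1
  · intro p hp
    calc (M p * N p) ^ 2 = M p ^ 2 * N p ^ 2 := by ring
      _ ≤ (M (p - 1) * M (p + 1)) * (N (p - 1) * N (p + 1)) :=
        mul_le_mul (hMc p hp) (hNc p hp) (by positivity)
          (mul_pos (hMp _) (hMp _)).le
      _ = _ := by ring
  · refine (hMt.atTop_mul_atTop₀ hNt).congr fun p => ?_
    exact (Real.mul_rpow (hMp p).le (hNp p).le).symm

/-- The quotient sequence `M_{k+1} / M_k` is nondecreasing. -/
lemma IsLC.quot_mono {M : ℕ → ℝ} (hM : IsLC M) : Monotone fun k => M (k + 1) / M k := by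
  refine monotone_nat_of_le_succ fun k => ?_
  rw [div_le_div_iff₀ (hM.1 _) (hM.1 _)]
  have := hM.2.2.2.1 (k + 1) (by omega)
  simp only [Nat.add_sub_cancel] at this
  nlinarith

lemma IsLC.quot_pos {M : ℕ → ℝ} (hM : IsLC M) (k : ℕ) : 0 < M (k + 1) / M k :=
  div_pos (hM.1 _) (hM.1 _)

/-- The quotients `M_{k+1} / M_k` are unbounded: a bound `s` would give `M_k ≤ s^k`, contradicting
`M_k^{1/k} → ∞`. -/
lemma IsLC.exists_lt_quot {M : ℕ → ℝ} (hM : IsLC M) (s : ℝ) : ∃ p, s < M (p + 1) / M p := by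
  by_contra! h
  have hs : 0 < s := (hM.quot_pos 0).trans_le (h 0)
  have hle : ∀ k, M k ≤ s ^ k := by
    intro k
    induction k with
    | zero => simp [hM.2.1]
    | succ k ih =>
      have := (div_le_iff₀ (hM.1 k)).1 (h k)
      calc M (k + 1) ≤ s * M k := this
        _ ≤ s * s ^ k := by gcongr
        _ = s ^ (k + 1) := by ring
  obtain ⟨k, hk, hk1⟩ :=
    ((hM.2.2.2.2.eventually_gt_atTop s).and (eventually_ge_atTop 1)).exists
  have h1 : M k ^ ((k : ℝ)⁻¹) ≤ (s ^ k) ^ ((k : ℝ)⁻¹) :=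
    Real.rpow_le_rpow (hM.1 k).le (hle k) (by positivity)
  rw [Real.pow_rpow_inv_natCast hs.le (by omega)] at h1
  linarith

/-- If `p` is where the quotients `M_{k+1} / M_k` cross the level `s`, then `s^k / M_k` is maximal
at `k = p`. -/
lemma IsLC.le_of_cross {M : ℕ → ℝ} (hM : IsLC M) {s : ℝ} (hs : 0 < s) {p : ℕ}
    (h1 : ∀ k < p, M (k + 1) / M k ≤ s) (h2 : s ≤ M (p + 1) / M p) (k : ℕ) :
    s ^ k / M k ≤ s ^ p / M p := by
  rcases le_total p k with h | h
  · induction k, h using Nat.le_induction with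
    | base => exact le_rfl
    | succ k hk ih =>
      refine le_trans ?_ ih
      have hq := (le_div_iff₀ (hM.1 k)).1 (h2.trans (hM.quot_mono hk))
      rw [div_le_div_iff₀ (hM.1 _) (hM.1 _), pow_succ, mul_assoc]
      gcongr
  · induction h using Nat.decreasingInduction with
    | self => exact le_rfl
    | of_succ k hk ih =>
      refine le_trans ?_ ih
      have hq := (div_le_iff₀ (hM.1 k)).1 (h1 k hk)
      rw [div_le_div_iff₀ (hM.1 _) (hM.1 _), pow_succ, mul_assoc]
      gcongr

lemma IsLC.log_le_of_cross {M : ℕ → ℝ} (hM : IsLC M) {s : ℝ} (hs : 0 < s) {p : ℕ}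
    (h1 : ∀ k < p, M (k + 1) / M k ≤ s) (h2 : s ≤ M (p + 1) / M p) (k : ℕ) :
    Real.log (s ^ k / M k) ≤ Real.log (s ^ p / M p) :=
  Real.log_le_log (div_pos (pow_pos hs _) (hM.1 _)) (hM.le_of_cross hs h1 h2 k)

/-- The supremum defining `ω_M(s)` is finite for `s > 0`. -/
lemma IsLC.bddAbove {M : ℕ → ℝ} (hM : IsLC M) {s : ℝ} (hs : 0 < s) :
    BddAbove (range fun k => Real.log (s ^ k / M k)) := by
  classical
  have hex := hM.exists_lt_quot s
  refine ⟨_, forall_mem_range.2 (hM.log_le_of_cross hs (p := Nat.find hex) ?_ ?_)⟩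
  · exact fun k hk => not_lt.1 (Nat.find_min hex hk)
  · exact (Nat.find_spec hex).le

lemma IsLC.le_omegaM {M : ℕ → ℝ} (hM : IsLC M) {s : ℝ} (hs : 0 < s) (k : ℕ) :
    Real.log (s ^ k / M k) ≤ omegaM M s :=
  le_ciSup (hM.bddAbove hs) k

lemma IsLC.omegaM_nonneg {M : ℕ → ℝ} (hM : IsLC M) {s : ℝ} (hs : 0 < s) : 0 ≤ omegaM M s := by
  simpa [hM.2.1] using hM.le_omegaM hs 0

/-- The terms with `k ≥ 1` contribute `log 0`, which is `0` by convention; this does not exceed the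
term `log (0 ^ 0 / M 0) = 0`, so the supremum has its intended value. -/
lemma IsLC.omegaM_zero {M : ℕ → ℝ} (hM : IsLC M) : omegaM M 0 = 0 := by
  have : ∀ k : ℕ, Real.log ((0 : ℝ) ^ k / M k) = 0 := by
    intro k
    rcases k with _ | k <;> simp [hM.2.1]
  simp [omegaM, this]

theorem stmt10 (M N : ℕ → ℝ) (hM : IsLC M) (hN : IsLC N) (t : ℝ) (ht : 0 ≤ t) :
    omegaM (fun p => M p * N p) t =
      ⨅ s : Set.Ioi (0 : ℝ), (omegaM M s.1 + omegaM N (t / s.1)) := by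
  classical
  have hMN := hM.mul hN
  have : Nonempty (Set.Ioi (0 : ℝ)) := ⟨⟨1, mem_Ioi.2 one_pos⟩⟩
  have hN0 : ∀ s : Set.Ioi (0 : ℝ), 0 ≤ omegaM N (t / s.1) := by
    intro s
    rcases ht.eq_or_lt with rfl | ht
    · simp [hN.omegaM_zero]
    · exact hN.omegaM_nonneg (div_pos ht s.2)
  have hbdd : BddBelow (range fun s : Set.Ioi (0 : ℝ) => omegaM M s.1 + omegaM N (t / s.1)) :=
    ⟨0, forall_mem_range.2 fun s => add_nonneg (hM.omegaM_nonneg s.2) (hN0 s)⟩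
  rcases ht.eq_or_lt with rfl | ht
  · rw [hMN.omegaM_zero]
    refine le_antisymm (le_ciInf fun s => add_nonneg (hM.omegaM_nonneg s.2) (hN0 s)) ?_
    refine (ciInf_le hbdd ⟨1, mem_Ioi.2 one_pos⟩).trans ?_
    -- `ω_M(1) = 0`, since `1 ≤ M_1 / M_0` makes the index `0` optimal at `s = 1`.
    have h1 : omegaM M 1 ≤ 0 := ciSup_le fun k => by
      simpa [hM.2.1] using
        hM.log_le_of_cross one_pos (p := 0) (by simp) (by simpa [hM.2.1] using hM.2.2.1) k
    simpa [hN.omegaM_zero] using h1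
  refine le_antisymm (le_ciInf fun s => ciSup_le fun p => ?_) ?_
  · have hs : 0 < s.1 := s.2
    have hMp := hM.1 p
    have hNp := hN.1 p
    have heq : t ^ p / (M p * N p) = (s.1 ^ p / M p) * ((t / s.1) ^ p / N p) := by
      rw [div_pow]
      field_simp
    rw [heq, Real.log_mul (by positivity) (by positivity)]
    exact add_le_add (hM.le_omegaM hs p) (hN.le_omegaM (div_pos ht hs) p)
  · have hex := hMN.exists_lt_quot t
    obtain ⟨p, hp, hmin⟩ : ∃ p, t ≤ (M (p + 1) / M p) * (N (p + 1) / N p) ∧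
        ∀ k < p, (M (k + 1) / M k) * (N (k + 1) / N k) ≤ t := by
      refine ⟨Nat.find hex, ?_, fun k hk => ?_⟩
      · rw [div_mul_div_comm]
        exact (Nat.find_spec hex).le
      · rw [div_mul_div_comm]
        exact not_lt.1 (Nat.find_min hex hk)
    obtain ⟨s, hs, hs1, hs2, hs3, hs4⟩ : ∃ s : ℝ, 0 < s ∧ (∀ k < p, M (k + 1) / M k ≤ s) ∧
        s ≤ M (p + 1) / M p ∧ (∀ k < p, N (k + 1) / N k ≤ t / s) ∧
        t / s ≤ N (p + 1) / N p := by
      have hνp := hN.quot_pos p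
      have hle : t / (N (p + 1) / N p) ≤ M (p + 1) / M p := (div_le_iff₀ hνp).2 hp
      rcases p with _ | j
      · refine ⟨t / (N (0 + 1) / N 0), div_pos ht hνp, by simp, hle, by simp, ?_⟩
        rw [div_div_cancel₀ ht.ne']
      · have hνj := hN.quot_pos j
        have hs := lt_max_of_lt_left (c := t / (N (j + 1 + 1) / N (j + 1))) (hM.quot_pos j)
        refine ⟨max (M (j + 1) / M j) (t / (N (j + 1 + 1) / N (j + 1))), hs,
          fun k hk => ?_, max_le (hM.quot_mono j.le_succ) hle, fun k hk => ?_, ?_⟩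
        · exact (hM.quot_mono (Nat.lt_succ_iff.1 hk)).trans (le_max_left _ _)
        · refine (hN.quot_mono (Nat.lt_succ_iff.1 hk)).trans ?_
          change N (j + 1) / N j ≤ _
          rw [le_div_comm₀ hνj hs]
          refine max_le ((le_div_iff₀ hνj).2 (hmin j j.lt_succ_self)) ?_
          exact div_le_div_of_nonneg_left ht.le hνj (hN.quot_mono j.le_succ)
        · rw [div_le_comm₀ hs hνp]
          exact le_max_right _ _
    refine (ciInf_le hbdd ⟨s, hs⟩).trans ?_
    have hts : 0 < t / s := div_pos ht hs
    have hMp := hM.1 p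
    have hNp := hN.1 p
    calc omegaM M s + omegaM N (t / s)
        ≤ Real.log (s ^ p / M p) + Real.log ((t / s) ^ p / N p) :=
          add_le_add (ciSup_le (hM.log_le_of_cross hs hs1 hs2))
            (ciSup_le (hN.log_le_of_cross hts hs3 hs4))
      _ = Real.log (t ^ p / (M p * N p)) := by
          rw [← Real.log_mul (by positivity) (by positivity)]
          congr 1
          rw [div_pow]
          field_simp
      _ ≤ omegaM (fun p => M p * N p) t := hMN.le_omegaM ht p
end

section
/- Let M belong to the class LC. Then for any integer ℓ ≥ 2 and all p ≥ 1: M_p ≤ (M_{ℓ(p−1)})^{1/ℓ}·(M_{ℓp})^{1/(ℓp)} and (M_p)^ℓ ≤ M_{ℓp−1}·(M_{ℓp})^{1/(ℓp)}. -/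
/-!
Put `f = log M`. It is convex on `ℕ` with `f 0 = 0`, so `f q / q` is nondecreasing: with
`c = f p / p` we have `c * q ≤ f q` for every `q ≥ p` (`le_log_of_le`), and also for `q = 0`.
Both inequalities follow by taking logarithms and applying this bound to each factor on the right:
`f (l (p - 1)) / l + f (l p) / (l p) ≥ c (p - 1) + c = f p`, and
`f (l p - 1) + f (l p) / (l p) ≥ c (l p - 1) + c = l f p`.
The index `l (p - 1)` is at least `p` unless `p = 1`, where it is `0`.
-/

open Real Filter Set

/-- Discrete form of the monotonicity of `q ↦ log (M q) / q`, with denominators cleared. -/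
lemma succ_mul_log_le {M : ℕ → ℝ} (hM : IsLC M) (n : ℕ) :
    ((n : ℝ) + 1) * Real.log (M n) ≤ n * Real.log (M (n + 1)) := by
  obtain ⟨hpos, h0, -, hconv, -⟩ := hM
  induction n with
  | zero => simp [h0]
  | succ n ih =>
    have h := Real.log_le_log (pow_pos (hpos (n + 1)) 2) (hconv (n + 1) (by omega))
    rw [Nat.add_sub_cancel, Real.log_pow,
      Real.log_mul (hpos _).ne' (hpos _).ne'] at h
    push_cast at h ⊢
    nlinarith [mul_le_mul_of_nonneg_left h (show (0 : ℝ) ≤ (n : ℝ) + 1 by positivity)]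

lemma le_log_of_le {M : ℕ → ℝ} (hM : IsLC M) {p q : ℕ} (hp : 1 ≤ p) (hpq : p ≤ q) :
    Real.log (M p) / p * q ≤ Real.log (M q) := by
  induction q, hpq using Nat.le_induction with
  | base =>
    have : (p : ℝ) ≠ 0 := by positivity
    exact (div_mul_cancel₀ _ this).le
  | succ n hn ih =>
    have hn0 : (0 : ℝ) < n := by exact_mod_cast (by omega : 0 < n)
    have h := succ_mul_log_le hM n
    push_cast
    refine le_of_mul_le_mul_left ?_ hn0
    nlinarith [mul_le_mul_of_nonneg_left ih (show (0 : ℝ) ≤ (n : ℝ) + 1 by positivity)]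

theorem stmt19 (M : ℕ → ℝ) (hM : IsLC M) (l : ℕ) (hl : 2 ≤ l) (p : ℕ) (hp : 1 ≤ p) :
    M p ≤ (M (l * (p - 1))) ^ ((l : ℝ)⁻¹) * (M (l * p)) ^ (((l : ℝ) * (p : ℝ))⁻¹) ∧
    (M p) ^ l ≤ M (l * p - 1) * (M (l * p)) ^ (((l : ℝ) * (p : ℝ))⁻¹) := by
  have hpos := hM.1
  have hp0 : (0 : ℝ) < p := by exact_mod_cast hp
  have hl0 : (0 : ℝ) < l := by exact_mod_cast (by omega : 0 < l)
  have hlp : p + 1 ≤ l * p := by nlinarith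
  obtain ⟨c, hc⟩ : ∃ c, c = Real.log (M p) / p := ⟨_, rfl⟩
  have hcp : Real.log (M p) = c * p := by rw [hc]; field_simp
  -- the factor common to both right-hand sides contributes at least `c`
  have htop : c ≤ ((l : ℝ) * p)⁻¹ * Real.log (M (l * p)) := by
    have h := le_log_of_le hM hp (show p ≤ l * p by omega)
    rw [← hc] at h
    push_cast at h
    rw [inv_mul_eq_div, le_div_iff₀ (by positivity)]
    exact h
  constructor
  · have hlow : c * (p - 1) ≤ (l : ℝ)⁻¹ * Real.log (M (l * (p - 1))) := by
      rcases hp.eq_or_lt with rfl | hp2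
      · simp [hM.2.1]
      · obtain ⟨k, rfl⟩ : ∃ k, p = k + 1 := ⟨p - 1, by omega⟩
        have h := le_log_of_le hM hp (show k + 1 ≤ l * (k + 1 - 1) by
          rw [Nat.add_sub_cancel]; nlinarith)
        rw [← hc, Nat.add_sub_cancel] at h
        push_cast at h
        rw [inv_mul_eq_div, le_div_iff₀ hl0, Nat.add_sub_cancel]
        push_cast
        linarith
    rw [← Real.log_le_log_iff (hpos p)
        (mul_pos (Real.rpow_pos_of_pos (hpos _) _) (Real.rpow_pos_of_pos (hpos _) _)),
      Real.log_mul (Real.rpow_pos_of_pos (hpos _) _).ne' (Real.rpow_pos_of_pos (hpos _) _).ne',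
      Real.log_rpow (hpos _), Real.log_rpow (hpos _)]
    linarith
  · have hlow : c * (l * p - 1) ≤ Real.log (M (l * p - 1)) := by
      have h := le_log_of_le hM hp (show p ≤ l * p - 1 by omega)
      rw [← hc, Nat.cast_sub (by omega)] at h
      push_cast at h
      exact h
    rw [← Real.log_le_log_iff (pow_pos (hpos p) l)
        (mul_pos (hpos _) (Real.rpow_pos_of_pos (hpos _) _)),
      Real.log_mul (hpos _).ne' (Real.rpow_pos_of_pos (hpos _) _).ne',
      Real.log_pow, Real.log_rpow (hpos _), hcp]
    linarith
end
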